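/- Let γ ∈ (0,2), set Q = 2/γ + γ/2, and let ξ > 0. Let D be a metric on the unit square [0,1]². Assume: (i) for every s ∈ (0, ξQ) and every ζ ∈ (0,1) there exists N ∈ ℕ such that for all n ≥ N, the number of squares S ∈ 𝒟_n whose D-diameter exceeds 2^{−sn} is at most 2^{(2 − (ξQ − s)²/(2ξ²) + ζ)·n}; and (ii) for every s ∈ (0, ξ(Q−2)) there exists N ∈ ℕ such that for all n ≥ N, every S ∈ 𝒟_n has D-diameter at most 2^{−sn}. Then for every set X ⊆ [0,1]², writing d₀ for the Hausdorff dimension of X with respect to the Euclidean metric: the Hausdorff dimension of X with respect to D is at most d₀/(ξ(Q − √(4 − 2d₀))) if d₀ < 2 − γ²/2, and is at most γ/ξ in any case. -/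

import Mathlib

open scoped ENNReal NNReal

noncomputable section

/-- Distance in an alternative metric `D` on `ℂ`. -/
def mdist (D : MetricSpace ℂ) (a b : ℂ) : ℝ := @dist ℂ D.toDist a b

/-- The `D`-distance between two sets: `inf {D(a,b) : a ∈ A, b ∈ B}`. -/
def msetDist (D : MetricSpace ℂ) (A B : Set ℂ) : ℝ :=
  sInf {r : ℝ | ∃ a ∈ A, ∃ b ∈ B, r = mdist D a b}

/-- The `D`-diameter of a set: `sup {D(u,v) : u, v ∈ A}`. -/
def mdiam (D : MetricSpace ℂ) (A : Set ℂ) : ℝ≥0∞ :=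
  @EMetric.diam ℂ (@PseudoMetricSpace.toPseudoEMetricSpace ℂ D.toPseudoMetricSpace) A

/-- Hausdorff dimension of `X` as a subset of the metric space `(ℂ, D)`. -/
def mdimH (D : MetricSpace ℂ) (X : Set ℂ) : ℝ≥0∞ :=
  @dimH ℂ (@MetricSpace.toEMetricSpace ℂ D) X

/-- The open Euclidean `r`-neighborhood of a set `A ⊆ ℂ`. -/
def euclNbhd (r : ℝ) (A : Set ℂ) : Set ℂ := {z | ∃ a ∈ A, dist z a < r}

/-- The dyadic square `[j 2^(-n), (j+1) 2^(-n)] × [k 2^(-n), (k+1) 2^(-n)]` in `ℂ ≅ ℝ²`. -/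
def dyadicSquare (n j k : ℤ) : Set ℂ :=
  {z : ℂ | z.re ∈ Set.Icc ((j : ℝ) * 2 ^ (-n)) (((j : ℝ) + 1) * 2 ^ (-n)) ∧
           z.im ∈ Set.Icc ((k : ℝ) * 2 ^ (-n)) (((k : ℝ) + 1) * 2 ^ (-n))}

/-- The `D`-length of a path restricted to a set: the supremum over all finite increasing
sequences of sample points in the set of the sums of consecutive `D`-distances. -/
def mpathLength (D : MetricSpace ℂ) (P : ℝ → ℂ) (s : Set ℝ) : ℝ≥0∞ :=
  @eVariationOn ℝ _ ℂ (@PseudoMetricSpace.toPseudoEMetricSpace ℂ D.toPseudoMetricSpace) P s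

/-- `(ℂ, D)` is a length space: `D(x,y)` is the infimum of the `D`-lengths of continuous
paths from `x` to `y`. -/
def IsLengthSpace (D : MetricSpace ℂ) : Prop :=
  ∀ x y : ℂ,
    ENNReal.ofReal (mdist D x y) =
      ⨅ (P : ℝ → ℂ) (_ : ContinuousOn P (Set.Icc 0 1)) (_ : P 0 = x) (_ : P 1 = y),
        mpathLength D P (Set.Icc 0 1)

/-- The unit square `[0,1]²` in `ℂ`. -/
def unitSquare : Set ℂ := dyadicSquare 0 0 0

/-- The `D`-diameter of a subset `A` of the unit square, for a metric `D` on `[0,1]²`. -/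
def sqDiam (D : MetricSpace ↥unitSquare) (A : Set ℂ) : ℝ≥0∞ :=
  @EMetric.diam ↥unitSquare
    (@PseudoMetricSpace.toPseudoEMetricSpace ↥unitSquare D.toPseudoMetricSpace)
    (Subtype.val ⁻¹' A)

/-- The Hausdorff dimension of a subset `X` of the unit square with respect to a metric `D`
on `[0,1]²`. -/
def sqDimH (D : MetricSpace ↥unitSquare) (X : Set ℂ) : ℝ≥0∞ :=
  @dimH ↥unitSquare (@MetricSpace.toEMetricSpace ↥unitSquare D) (Subtype.val ⁻¹' X)

/-!
Fix an exponent `t`. The points all of whose dyadic squares of high level have `D`-diameter at most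
`2⁻ᵗⁿ` form a countable union of sets on which the identity map from the Euclidean metric to `D` is
locally `t`-Hölder, and on these the `D`-dimension of `X` is at most `d₀ / t`. Every other point
lies in squares of diameter more than `2⁻ᵗⁿ` for infinitely many `n`. Cut the exponents up to `t`
into short intervals, starting from an exponent for which no such squares occur. Over an interval
from `s` to `s'` there are at most about `2 ^ (κ(s') n)` squares with diameter between `2 ^ (-s' n)`
and `2 ^ (-s n)`, where `κ(s) = 2 - (ξQ - s)² / (2ξ²)`. By a Hausdorff–Cantelli argument they
contribute dimension at most `κ(s') / s`, hence at most `sup κ(s) / s` in the limit of short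
intervals. The parabola `κ` lies below its tangent `s γ / ξ` through the origin, and `κ(s) / s`
increases up to the point of tangency `ξ(Q - γ)`. Taking `t = ξ(Q - √(4 - 2d₀))`, where `κ(t) = d₀`,
gives the first bound, and `t = 2ξ / γ` gives the second.
-/

open Filter Metric MeasureTheory Set Topology

section HausdorffCantelli

variable {Y ι : Type*} [EMetricSpace Y]

theorem hausdorffMeasure_setOf_frequently_mem_eq_zero [MeasurableSpace Y] [BorelSpace Y]
    [Countable ι] (A : ι → Set Y) {q : ℝ} (hq : 0 < q) (hA : ∑' i, ediam (A i) ^ q ≠ ∞) :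
    μH[q] {y | ∃ᶠ i in cofinite, y ∈ A i} = 0 := by
  have htail := ENNReal.tendsto_tsum_compl_atTop_zero hA
  refine le_antisymm ((Measure.hausdorffMeasure_le_liminf_tsum (l := atTop)
    (ι := fun T : Finset ι => {i // i ∉ T}) q _
    (fun T => (∑' i : {i // i ∉ T}, ediam (A i) ^ q) ^ q⁻¹) ?_ (fun _ i => A i) ?_ ?_).trans_eq
      htail.liminf_eq) zero_le
  · simpa [hq] using htail.ennrpow_const q⁻¹
  · refine Eventually.of_forall fun T i => ?_
    rw [ENNReal.le_rpow_inv_iff hq]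
    exact ENNReal.le_tsum i
  · refine Eventually.of_forall fun T y hy => ?_
    obtain ⟨i, hyi, hiT⟩ := (frequently_cofinite_iff_infinite.1 hy).exists_notMem_finset T
    exact mem_iUnion.2 ⟨⟨i, hiT⟩, hyi⟩

theorem frequently_cofinite_sigma_of_frequently_atTop {F : ℕ → Finset ι} {p : ℕ → ι → Prop}
    (h : ∃ᶠ n in atTop, ∃ i ∈ F n, p n i) (N : ℕ) :
    ∃ᶠ x : Σ n : ℕ, F (n + N) in cofinite, p (x.1 + N) x.2 := by
  rw [← map_add_atTop_eq_nat N, frequently_map, Nat.frequently_atTop_iff_infinite] at h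
  rw [frequently_cofinite_iff_infinite]
  refine Infinite.of_image Sigma.fst (h.mono ?_)
  rintro n ⟨i, hi, hpi⟩
  exact ⟨⟨n, i, hi⟩, hpi, rfl⟩

theorem tsum_ofReal_two_rpow_mul_ne_top {b : ℝ} (hb : b < 0) :
    ∑' n : ℕ, ENNReal.ofReal ((2 : ℝ) ^ (b * n)) ≠ ∞ := by
  simp only [Real.rpow_mul_natCast zero_le_two]
  exact (summable_geometric_of_lt_one (by positivity)
    (Real.rpow_lt_one_of_one_lt_of_neg one_lt_two hb)).tsum_ofReal_ne_top

theorem eventually_le_two_rpow_mul_of_lt {c : ℕ → ℝ} {a b : ℝ}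
    (hc : ∀ ζ : ℝ, 0 < ζ → ζ < 1 → ∃ N : ℕ, ∀ n : ℕ, N ≤ n → c n ≤ 2 ^ ((b + ζ) * n))
    (hba : b < a) : ∀ᶠ n : ℕ in atTop, c n ≤ 2 ^ (a * n) := by
  obtain ⟨N, hN⟩ := hc (min (a - b) (1 / 2)) (lt_min (sub_pos.2 hba) one_half_pos)
    ((min_le_right _ _).trans_lt one_half_lt_one)
  filter_upwards [eventually_ge_atTop N] with n hn
  refine (hN n hn).trans (Real.rpow_le_rpow_of_exponent_le one_le_two ?_)
  gcongr
  exact le_sub_iff_add_le'.1 (min_le_left _ _)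

theorem sum_ediam_rpow_le {F : Finset ι} {A : ι → Set Y} {a s q x : ℝ} (hq : 0 ≤ q)
    (hcard : (F.card : ℝ) ≤ 2 ^ (a * x))
    (hdiam : ∀ i ∈ F, ediam (A i) ≤ ENNReal.ofReal ((2 : ℝ) ^ (-(s * x)))) :
    ∑ i ∈ F, ediam (A i) ^ q ≤ ENNReal.ofReal ((2 : ℝ) ^ ((a - s * q) * x)) :=
  calc ∑ i ∈ F, ediam (A i) ^ q
      ≤ F.card • ENNReal.ofReal (((2 : ℝ) ^ (-(s * x))) ^ q) := by
        refine Finset.sum_le_card_nsmul _ _ _ fun i hi => ?_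
        rw [← ENNReal.ofReal_rpow_of_pos (by positivity)]
        exact ENNReal.rpow_le_rpow (hdiam i hi) hq
    _ = ENNReal.ofReal (F.card * ((2 : ℝ) ^ (-(s * x))) ^ q) := by
        rw [nsmul_eq_mul, ENNReal.ofReal_mul (by positivity), ENNReal.ofReal_natCast]
    _ ≤ ENNReal.ofReal (2 ^ (a * x) * ((2 : ℝ) ^ (-(s * x))) ^ q) := by gcongr
    _ = ENNReal.ofReal ((2 : ℝ) ^ ((a - s * q) * x)) := by
        rw [← Real.rpow_mul zero_le_two, ← Real.rpow_add two_pos]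
        ring_nf

theorem dimH_setOf_frequently_mem_le (F : ℕ → Finset ι) (A : ℕ → ι → Set Y) {a s : ℝ} {q : ℝ≥0}
    (hq : 0 < q) (haq : a < s * q) (hcard : ∀ᶠ n : ℕ in atTop, ((F n).card : ℝ) ≤ 2 ^ (a * n))
    (hdiam : ∀ᶠ n : ℕ in atTop, ∀ i ∈ F n,
      ediam (A n i) ≤ ENNReal.ofReal ((2 : ℝ) ^ (-(s * n)))) :
    dimH {y | ∃ᶠ n in atTop, ∃ i ∈ F n, y ∈ A n i} ≤ q := by
  borelize Y
  obtain ⟨N, hN⟩ := eventually_atTop.1 (hcard.and hdiam)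
  have hsum : ∑' x : Σ n : ℕ, F (n + N), ediam (A (x.1 + N) x.2) ^ (q : ℝ) ≠ ∞ := by
    refine ne_top_of_le_ne_top (tsum_ofReal_two_rpow_mul_ne_top (sub_neg.2 haq)) ?_
    calc ∑' x : Σ n : ℕ, F (n + N), ediam (A (x.1 + N) x.2) ^ (q : ℝ)
        = ∑' n, ∑ i ∈ F (n + N), ediam (A (n + N) i) ^ (q : ℝ) := by
          rw [ENNReal.tsum_sigma']
          exact tsum_congr fun n =>
            Finset.tsum_subtype (F (n + N)) fun i => ediam (A (n + N) i) ^ (q : ℝ)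
      _ ≤ ∑' n : ℕ, ENNReal.ofReal ((2 : ℝ) ^ ((a - s * q) * (n + N : ℕ))) :=
          ENNReal.tsum_le_tsum fun n =>
            sum_ediam_rpow_le q.2 (hN _ (by omega)).1 (hN _ (by omega)).2
      _ ≤ ∑' n : ℕ, ENNReal.ofReal ((2 : ℝ) ^ ((a - s * q) * n)) :=
          ENNReal.tsum_comp_le_tsum_of_injective (add_left_injective N)
            fun n : ℕ => ENNReal.ofReal ((2 : ℝ) ^ ((a - s * q) * n))
  have hzero := hausdorffMeasure_setOf_frequently_mem_eq_zero
    (fun x : Σ n : ℕ, F (n + N) => A (x.1 + N) x.2) (NNReal.coe_pos.2 hq) hsum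
  refine dimH_le_of_hausdorffMeasure_ne_top (ne_of_eq_of_ne (measure_mono_null ?_ hzero) (by simp))
  exact fun y hy => frequently_cofinite_sigma_of_frequently_atTop (p := fun n i => y ∈ A n i) hy N

end HausdorffCantelli

theorem dimH_le_dimH_image_div_of_edist_le {Y E : Type*} [EMetricSpace Y] [EMetricSpace E]
    [SecondCountableTopology E] {e : Y → E} {G : Set Y} {C r : ℝ≥0} {ρ : ℝ≥0∞} (hr : 0 < r)
    (hρ : 0 < ρ) (h : ∀ y ∈ G, ∀ y' ∈ G, edist (e y) (e y') ≤ ρ →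
      edist y y' ≤ C * edist (e y) (e y') ^ (r : ℝ)) :
    dimH G ≤ dimH (e '' G) / r := by
  rcases G.eq_empty_or_nonempty with rfl | ⟨y₀, -⟩
  · simp
  have : Nonempty Y := ⟨y₀⟩
  have hinj : InjOn e G := fun y hy y' hy' heq => by
    simpa [heq, hr] using h y hy y' hy' (by simp [heq])
  have hleft : LeftInvOn (Function.invFunOn e G) e G := hinj.leftInvOn_invFunOn
  have hholder : ∀ x ∈ e '' G, ∃ C : ℝ≥0, ∃ U ∈ 𝓝[e '' G] x,
      HolderOnWith C r (Function.invFunOn e G) U := by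
    refine fun x _ => ⟨C, eball x (ρ / 2) ∩ e '' G, inter_mem (mem_nhdsWithin_of_mem_nhds
      (eball_mem_nhds x (ENNReal.half_pos hρ.ne'))) self_mem_nhdsWithin, ?_⟩
    rintro _ ⟨hyx, y, hy, rfl⟩ _ ⟨hyx', y', hy', rfl⟩
    rw [hleft hy, hleft hy']
    refine h y hy y' hy' ((edist_triangle_right _ _ x).trans ?_)
    exact (add_le_add hyx.le hyx'.le).trans_eq (ENNReal.add_halves ρ)
  simpa only [hleft.image_image] using dimH_image_le_of_locally_holder_on hr hholder

section Families

variable {Y E ι : Type*} {e : Y → E} {F : ℕ → Finset ι} {A : ℕ → ι → Set Y}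

/-- The sets `A n i`, `i ∈ F n`, cover `Y` in such a way that points whose images under `e` are at
distance at most `2⁻ⁿ` lie in intersecting members of level `n`. This is what the argument needs to
know about the dyadic squares of side length `2⁻ⁿ`. -/
def IsDyadicallyChained [PseudoMetricSpace E] (e : Y → E) (F : ℕ → Finset ι)
    (A : ℕ → ι → Set Y) : Prop :=
  ∀ (n : ℕ) (y y' : Y), dist (e y) (e y') ≤ (1 / 2) ^ n →
    ∃ i ∈ F n, ∃ j ∈ F n, y ∈ A n i ∧ y' ∈ A n j ∧ (A n i ∩ A n j).Nonempty

variable [EMetricSpace Y]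

open Classical in
/-- The members of level `n` which are large for the exponent `s`: their diameter exceeds
`2⁻ˢⁿ`. -/
def largeIndices (F : ℕ → Finset ι) (A : ℕ → ι → Set Y) (s : ℝ) (n : ℕ) : Finset ι :=
  {i ∈ F n | ENNReal.ofReal ((2 : ℝ) ^ (-(s * n))) < ediam (A n i)}

/-- The points lying in large members of infinitely many levels. -/
def largeLimsup (F : ℕ → Finset ι) (A : ℕ → ι → Set Y) (s : ℝ) : Set Y :=
  {y | ∃ᶠ n in atTop, ∃ i ∈ largeIndices F A s n, y ∈ A n i}

/-- The points which lie in no large member of level at least `N`. -/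
def regularPoints (F : ℕ → Finset ι) (A : ℕ → ι → Set Y) (s : ℝ) (N : ℕ) : Set Y :=
  {y | ∀ n ≥ N, ∀ i ∈ largeIndices F A s n, y ∉ A n i}

theorem mem_largeIndices {s : ℝ} {n : ℕ} {i : ι} :
    i ∈ largeIndices F A s n ↔
      i ∈ F n ∧ ENNReal.ofReal ((2 : ℝ) ^ (-(s * n))) < ediam (A n i) := by
  simp only [largeIndices, Finset.mem_filter]

theorem compl_largeLimsup (s : ℝ) : (largeLimsup F A s)ᶜ = ⋃ N, regularPoints F A s N := by
  ext y
  simp only [largeLimsup, regularPoints, mem_compl_iff, mem_ofPred_eq, not_frequently,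
    eventually_atTop, mem_iUnion, not_exists, not_and]

theorem edist_le_of_mem_regularPoints [PseudoMetricSpace E] (hA : IsDyadicallyChained e F A)
    {t : ℝ} {N n : ℕ} (hn : N ≤ n) {y y' : Y} (hy : y ∈ regularPoints F A t N)
    (hy' : y' ∈ regularPoints F A t N) (h : dist (e y) (e y') ≤ (1 / 2) ^ n) :
    edist y y' ≤ ENNReal.ofReal (2 * 2 ^ (-(t * n))) := by
  obtain ⟨i, hi, j, hj, hyi, hyj, c, hci, hcj⟩ := hA n y y' h
  have hdiam : ∀ {z : Y}, z ∈ regularPoints F A t N → ∀ {k : ι}, k ∈ F n → z ∈ A n k →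
      ediam (A n k) ≤ ENNReal.ofReal (2 ^ (-(t * n))) := fun hz k hk hzk =>
    not_lt.1 fun hlt => hz n hn k (mem_largeIndices.2 ⟨hk, hlt⟩) hzk
  calc edist y y' ≤ edist y c + edist c y' := edist_triangle _ _ _
    _ ≤ ENNReal.ofReal (2 ^ (-(t * n))) + ENNReal.ofReal (2 ^ (-(t * n))) :=
        add_le_add ((edist_le_ediam_of_mem hyi hci).trans (hdiam hy hi hyi))
          ((edist_le_ediam_of_mem hcj hyj).trans (hdiam hy' hj hyj))
    _ = ENNReal.ofReal (2 * 2 ^ (-(t * n))) := by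
        rw [← ENNReal.ofReal_add (by positivity) (by positivity), two_mul]

theorem edist_le_mul_edist_rpow_of_mem_regularPoints [MetricSpace E]
    (hA : IsDyadicallyChained e F A) {t : ℝ} (ht : 0 < t) {N : ℕ} {y y' : Y}
    (hy : y ∈ regularPoints F A t N) (hy' : y' ∈ regularPoints F A t N)
    (h : dist (e y) (e y') ≤ (1 / 2) ^ N) :
    edist y y' ≤ ENNReal.ofReal (2 * 2 ^ t) * edist (e y) (e y') ^ t := by
  rcases dist_nonneg.eq_or_lt' (a := dist (e y) (e y')) with hzero | hpos
  · have hlim : Tendsto (fun n : ℕ => ENNReal.ofReal (2 * 2 ^ (-(t * n)))) atTop (𝓝 0) := by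
      simp only [← neg_mul, Real.rpow_mul_natCast zero_le_two]
      simpa using ENNReal.tendsto_ofReal ((tendsto_pow_atTop_nhds_zero_of_lt_one (by positivity)
        (Real.rpow_lt_one_of_one_lt_of_neg one_lt_two (neg_lt_zero.2 ht))).const_mul 2)
    refine (ge_of_tendsto hlim ?_).trans zero_le
    filter_upwards [eventually_ge_atTop N] with n hn
    exact edist_le_of_mem_regularPoints hA hn hy hy' (hzero.trans_le (by positivity))
  obtain ⟨n, hlt, hle⟩ := exists_nat_pow_near_of_lt_one hpos
    (h.trans (pow_le_one₀ (by norm_num) (by norm_num))) one_half_pos one_half_lt_one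
  have hNn : N ≤ n := Nat.lt_succ_iff.1 <|
    (pow_lt_pow_iff_right_of_lt_one₀ one_half_pos one_half_lt_one).1 (hlt.trans_le h)
  calc edist y y' ≤ ENNReal.ofReal (2 * 2 ^ (-(t * n))) :=
        edist_le_of_mem_regularPoints hA hNn hy hy' hle
    _ = ENNReal.ofReal (2 * 2 ^ t * ((1 / 2) ^ (n + 1)) ^ t) := by
        rw [one_div, inv_pow, ← Real.rpow_natCast 2 (n + 1), ← Real.rpow_neg zero_le_two,
          ← Real.rpow_mul zero_le_two, mul_assoc, ← Real.rpow_add two_pos]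
        push_cast
        ring_nf
    _ ≤ ENNReal.ofReal (2 * 2 ^ t) * edist (e y) (e y') ^ t := by
        rw [edist_dist, ENNReal.ofReal_rpow_of_pos hpos, ← ENNReal.ofReal_mul (by positivity)]
        gcongr

theorem dimH_regularPoints_inter_preimage_le [MetricSpace E] [SecondCountableTopology E]
    (hA : IsDyadicallyChained e F A) {t : ℝ} (ht : 0 < t) (N : ℕ) (X : Set E) :
    dimH (regularPoints F A t N ∩ e ⁻¹' X) ≤ dimH X / ENNReal.ofReal t := by
  refine (dimH_le_dimH_image_div_of_edist_le (C := (2 * 2 ^ t : ℝ).toNNReal)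
    (ρ := ENNReal.ofReal ((1 / 2) ^ N)) (e := e) (Real.toNNReal_pos.2 ht) (by positivity)
    fun y hy y' hy' h => ?_).trans
    (ENNReal.div_le_div_right (dimH_mono (image_subset_iff.2 inter_subset_right)) _)
  rw [Real.coe_toNNReal _ ht.le]
  rw [edist_dist, ENNReal.ofReal_le_ofReal_iff (by positivity)] at h
  exact edist_le_mul_edist_rpow_of_mem_regularPoints hA ht hy.1 hy'.1 h

theorem dimH_preimage_le_max_largeLimsup [MetricSpace E] [SecondCountableTopology E]
    (hA : IsDyadicallyChained e F A) {t : ℝ} (ht : 0 < t) (X : Set E) :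
    dimH (e ⁻¹' X) ≤ max (dimH (largeLimsup F A t)) (dimH X / ENNReal.ofReal t) := by
  have hcover : e ⁻¹' X ⊆ largeLimsup F A t ∪ ⋃ N, regularPoints F A t N ∩ e ⁻¹' X := by
    rw [← iUnion_inter, ← compl_largeLimsup, union_inter_distrib_left, union_compl_self, univ_inter]
    exact subset_union_right
  refine (dimH_mono hcover).trans ((dimH_union _ _).trans_le (max_le_max le_rfl ?_))
  rw [dimH_iUnion]
  exact iSup_le fun N => dimH_regularPoints_inter_preimage_le hA ht N X

theorem largeLimsup_eq_empty {s s₀ : ℝ} (hs : s ≤ s₀)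
    (hdiam : ∀ᶠ n : ℕ in atTop, ∀ i ∈ F n,
      ediam (A n i) ≤ ENNReal.ofReal ((2 : ℝ) ^ (-(s₀ * n)))) :
    largeLimsup F A s = ∅ := by
  refine eq_empty_of_forall_notMem fun y => not_frequently.2 (hdiam.mono ?_)
  rintro n hn ⟨i, hi, -⟩
  obtain ⟨hiF, hlt⟩ := mem_largeIndices.1 hi
  refine hlt.not_ge ((hn i hiF).trans ?_)
  gcongr
  exact one_le_two

theorem dimH_largeLimsup_le_max {s s' a : ℝ} {q : ℝ≥0} (hq : 0 < q) (haq : a < s * q)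
    (hcard : ∀ᶠ n : ℕ in atTop, ((largeIndices F A s' n).card : ℝ) ≤ 2 ^ (a * n)) :
    dimH (largeLimsup F A s') ≤ max (dimH (largeLimsup F A s)) q := by
  classical
  have hbetween : dimH {y | ∃ᶠ n in atTop,
      ∃ i ∈ largeIndices F A s' n \ largeIndices F A s n, y ∈ A n i} ≤ q := by
    refine dimH_setOf_frequently_mem_le _ A hq haq (hcard.mono fun n hn => ?_)
      (Eventually.of_forall fun n i hi => ?_)
    · exact (Nat.cast_le.2 (Finset.card_le_card Finset.sdiff_subset)).trans hn
    · obtain ⟨hi', hi⟩ := Finset.mem_sdiff.1 hi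
      exact not_lt.1 fun hlt => hi (mem_largeIndices.2 ⟨(mem_largeIndices.1 hi').1, hlt⟩)
  refine le_trans (dimH_mono fun y hy => ?_)
    ((dimH_union _ _).trans_le (max_le_max le_rfl hbetween))
  refine or_iff_not_imp_left.2 fun hys => (hy.and_eventually (not_frequently.1 hys)).mono ?_
  rintro n ⟨⟨i, hi, hyi⟩, hn⟩
  exact ⟨i, Finset.mem_sdiff.2 ⟨hi, fun his => hn ⟨i, his, hyi⟩⟩, hyi⟩

theorem exists_chain_lt_of_continuousOn {f g : ℝ → ℝ} {a b : ℝ} (hab : a ≤ b)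
    (hf : ContinuousOn f (Icc a b)) (hg : ContinuousOn g (Icc a b))
    (hfg : ∀ x ∈ Icc a b, f x < g x) :
    ∃ u : ℕ → ℝ, u 0 = a ∧ (∃ m, u m = b) ∧ (∀ k, u k ∈ Icc a b) ∧
      ∀ k, f (u (k + 1)) < g (u k) := by
  have hopen : ∀ m : ℝ, IsOpen {x : Icc a b | f x < m ∧ m < g x} := fun m =>
    (isOpen_lt hf.domRestrict continuous_const).inter (isOpen_lt continuous_const hg.domRestrict)
  obtain ⟨u, hu0, hmono, ⟨m, hm⟩, hsub⟩ := exists_monotone_Icc_subset_open_cover_Icc hab hopen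
    fun x _ => mem_iUnion.2 (exists_between (hfg x x.2))
  refine ⟨fun k => u k, by simp [hu0], ⟨m, by simp [hm m le_rfl]⟩,
    fun k => (u k).2, fun k => ?_⟩
  obtain ⟨c, hc⟩ := hsub k
  have huk : u k ≤ u (k + 1) := hmono k.le_succ
  exact (hc (right_mem_Icc.2 huk)).1.trans (hc (left_mem_Icc.2 huk)).2

theorem dimH_largeLimsup_le_of_lt {κ : ℝ → ℝ} {s₀ t : ℝ} {q : ℝ≥0} (hst : s₀ ≤ t) (hq : 0 < q)
    (hκ : ContinuousOn κ (Icc s₀ t)) (hempty : largeLimsup F A s₀ = ∅)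
    (hcard : ∀ s ∈ Icc s₀ t, ∀ a > κ s,
      ∀ᶠ n : ℕ in atTop, ((largeIndices F A s n).card : ℝ) ≤ 2 ^ (a * n))
    (hκq : ∀ s ∈ Icc s₀ t, κ s < s * q) :
    dimH (largeLimsup F A t) ≤ q := by
  obtain ⟨u, hu0, ⟨m, hm⟩, hmem, hstep⟩ :=
    exists_chain_lt_of_continuousOn hst hκ (by fun_prop) hκq
  rw [← hm]
  clear hm
  induction m with
  | zero => simp [hu0, hempty]
  | succ k ih =>
    obtain ⟨a, hκa, haq⟩ := exists_between (hstep k)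
    exact (dimH_largeLimsup_le_max hq haq (hcard _ (hmem (k + 1)) a hκa)).trans (max_le ih le_rfl)

theorem dimH_largeLimsup_le {κ : ℝ → ℝ} {t : ℝ} {q : ℝ≥0} (ht : 0 < t)
    (hκ : ContinuousOn κ (Ioc 0 t))
    (hdiam : ∃ s > (0 : ℝ), ∀ᶠ n : ℕ in atTop, ∀ i ∈ F n,
      ediam (A n i) ≤ ENNReal.ofReal ((2 : ℝ) ^ (-(s * n))))
    (hcard : ∀ s ∈ Ioc 0 t, ∀ a > κ s,
      ∀ᶠ n : ℕ in atTop, ((largeIndices F A s n).card : ℝ) ≤ 2 ^ (a * n))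
    (hκq : ∀ s ∈ Ioc 0 t, κ s ≤ s * q) :
    dimH (largeLimsup F A t) ≤ q := by
  obtain ⟨s₀, hs₀, hdiam⟩ := hdiam
  have hsub : Icc (min s₀ t) t ⊆ Ioc 0 t := Icc_subset_Ioc (lt_min hs₀ ht) le_rfl
  refine ENNReal.le_of_forall_pos_le_add fun ε hε _ => ?_
  rw [← ENNReal.coe_add]
  refine dimH_largeLimsup_le_of_lt (min_le_right s₀ t) (by positivity) (hκ.mono hsub)
    (largeLimsup_eq_empty (min_le_left s₀ t) hdiam) (fun s hs => hcard s (hsub hs)) fun s hs => ?_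
  have hs0 : 0 < s := (hsub hs).1
  have hε' : 0 < s * ε := mul_pos hs0 hε
  push_cast
  linarith [hκq s (hsub hs)]

theorem dimH_preimage_le_max [MetricSpace E] [SecondCountableTopology E]
    (hA : IsDyadicallyChained e F A) {κ : ℝ → ℝ} {t : ℝ} {q : ℝ≥0} (ht : 0 < t)
    (hκ : ContinuousOn κ (Ioc 0 t))
    (hdiam : ∃ s > (0 : ℝ), ∀ᶠ n : ℕ in atTop, ∀ i ∈ F n,
      ediam (A n i) ≤ ENNReal.ofReal ((2 : ℝ) ^ (-(s * n))))
    (hcard : ∀ s ∈ Ioc 0 t, ∀ a > κ s,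
      ∀ᶠ n : ℕ in atTop, ((largeIndices F A s n).card : ℝ) ≤ 2 ^ (a * n))
    (hκq : ∀ s ∈ Ioc 0 t, κ s ≤ s * q) (X : Set E) :
    dimH (e ⁻¹' X) ≤ max (q : ℝ≥0∞) (dimH X / ENNReal.ofReal t) :=
  (dimH_preimage_le_max_largeLimsup hA ht X).trans
    (max_le_max (dimH_largeLimsup_le ht hκ hdiam hcard hκq) le_rfl)

end Families

section KPZExponent

variable {δ γ Q ξ : ℝ}

/-- The growth exponent in the number of squares of diameter more than `2⁻ˢⁿ`, with the
Euclidean dimension `2` replaced by `δ`. -/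
def kpzExponent (δ Q ξ s : ℝ) : ℝ := δ - (ξ * Q - s) ^ 2 / (2 * ξ ^ 2)

theorem continuous_kpzExponent (δ Q ξ : ℝ) : Continuous (kpzExponent δ Q ξ) := by
  unfold kpzExponent
  fun_prop

theorem kpzExponent_mul_sub (hξ : ξ ≠ 0) (δ Q v : ℝ) :
    kpzExponent δ Q ξ (ξ * (Q - v)) = δ - v ^ 2 / 2 := by
  unfold kpzExponent
  field_simp
  ring

theorem kpzExponent_le_tangent (hγ : γ ≠ 0) (hQ : Q = δ / γ + γ / 2) (hξ : ξ ≠ 0) (s : ℝ) :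
    kpzExponent δ Q ξ s ≤ s * (γ / ξ) := by
  have hgap : s * (γ / ξ) - kpzExponent δ Q ξ s = (ξ * (Q - γ) - s) ^ 2 / (2 * ξ ^ 2) := by
    rw [kpzExponent, hQ]
    field_simp
    ring
  exact sub_nonneg.1 (hgap ▸ by positivity)

theorem monotoneOn_kpzExponent_div (hγ : γ ≠ 0) (hQ : Q = δ / γ + γ / 2) (hξ : ξ ≠ 0) :
    MonotoneOn (fun s => kpzExponent δ Q ξ s / s) (Ioc 0 (ξ * (Q - γ))) := by
  intro s hs t ht hst
  have hs0 : 0 < s := hs.1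
  have ht0 : 0 < t := ht.1
  have hdiff : kpzExponent δ Q ξ t / t - kpzExponent δ Q ξ s / s =
      (t - s) * ((ξ * (Q - γ)) ^ 2 - s * t) / (2 * ξ ^ 2 * s * t) := by
    rw [kpzExponent, kpzExponent, hQ]
    field_simp
    ring
  have hst2 : s * t ≤ (ξ * (Q - γ)) ^ 2 := by
    rw [sq]
    exact mul_le_mul hs.2 ht.2 ht0.le (hs0.le.trans hs.2)
  refine sub_nonneg.1 (hdiff ▸ ?_)
  have := sub_nonneg.2 hst
  have := sub_nonneg.2 hst2
  positivity

theorem lt_of_eq_div_add_div_two {v : ℝ} (hγ : 0 < γ) (hQ : Q = δ / γ + γ / 2) (hγv : γ < v)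
    (hv : v ^ 2 ≤ 2 * δ) : v < Q := by
  have hγQ : γ * Q = δ + γ ^ 2 / 2 := by
    rw [hQ]
    field_simp
  refine lt_of_mul_lt_mul_left ?_ hγ.le
  nlinarith [pow_pos (sub_pos.2 hγv) 2]

end KPZExponent

section WorstCaseKPZ

variable {Y E ι : Type*} [EMetricSpace Y] [MetricSpace E] [SecondCountableTopology E]
  {e : Y → E} {F : ℕ → Finset ι} {A : ℕ → ι → Set Y} {δ γ Q ξ : ℝ}

theorem dimH_preimage_le_of_dimH_lt (hA : IsDyadicallyChained e F A) (hγ : 0 < γ)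
    (hQ : Q = δ / γ + γ / 2) (hξ : 0 < ξ)
    (hcard : ∀ s ∈ Ioo 0 (ξ * Q), ∀ a > kpzExponent δ Q ξ s,
      ∀ᶠ n : ℕ in atTop, ((largeIndices F A s n).card : ℝ) ≤ 2 ^ (a * n))
    (hdiam : ∃ s > (0 : ℝ), ∀ᶠ n : ℕ in atTop, ∀ i ∈ F n,
      ediam (A n i) ≤ ENNReal.ofReal ((2 : ℝ) ^ (-(s * n))))
    {X : Set E} (hX : dimH X < ENNReal.ofReal (δ - γ ^ 2 / 2)) :
    dimH (e ⁻¹' X) ≤ ENNReal.ofReal ((dimH X).toReal /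
      (ξ * (Q - √(2 * δ - 2 * (dimH X).toReal)))) := by
  lift dimH X to ℝ≥0 using hX.ne_top with d₀ hd₀
  rw [ENNReal.coe_toReal]
  rw [← ENNReal.ofReal_coe_nnreal, ENNReal.ofReal_lt_ofReal_iff_of_nonneg d₀.coe_nonneg] at hX
  set v := √(2 * δ - 2 * d₀)
  have hv : v ^ 2 = 2 * δ - 2 * d₀ := Real.sq_sqrt (by nlinarith)
  have hγv : γ < v := Real.lt_sqrt_of_sq_lt (by linarith)
  have hvQ : v < Q := lt_of_eq_div_add_div_two hγ hQ hγv (by linarith [d₀.2])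
  have ht : 0 < ξ * (Q - v) := mul_pos hξ (sub_pos.2 hvQ)
  have htγ : ξ * (Q - v) ≤ ξ * (Q - γ) := by gcongr
  have htQ : ξ * (Q - v) < ξ * Q := by gcongr; linarith
  have hκt : kpzExponent δ Q ξ (ξ * (Q - v)) = d₀ := by
    rw [kpzExponent_mul_sub hξ.ne', hv]
    ring
  have hκ : ∀ s ∈ Ioc 0 (ξ * (Q - v)),
      kpzExponent δ Q ξ s ≤ s * (d₀ / (ξ * (Q - v)) : ℝ).toNNReal := by
    intro s hs
    rw [Real.coe_toNNReal _ (by positivity), ← div_le_iff₀' hs.1, ← hκt]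
    exact monotoneOn_kpzExponent_div hγ.ne' hQ hξ.ne' ⟨hs.1, hs.2.trans htγ⟩ ⟨ht, htγ⟩ hs.2
  refine (dimH_preimage_le_max hA ht (continuous_kpzExponent δ Q ξ).continuousOn hdiam
    (fun s hs => hcard s ⟨hs.1, hs.2.trans_lt htQ⟩) hκ X).trans (max_le le_rfl ?_)
  rw [← hd₀, ENNReal.ofReal_div_of_pos ht, ENNReal.ofReal_coe_nnreal]

theorem dimH_preimage_le_of_dimH_univ_le (hA : IsDyadicallyChained e F A)
    (hE : dimH (univ : Set E) ≤ ENNReal.ofReal δ) (hδ : 0 < δ) (hγ : 0 < γ)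
    (hQ : Q = δ / γ + γ / 2) (hξ : 0 < ξ)
    (hcard : ∀ s ∈ Ioo 0 (ξ * Q), ∀ a > kpzExponent δ Q ξ s,
      ∀ᶠ n : ℕ in atTop, ((largeIndices F A s n).card : ℝ) ≤ 2 ^ (a * n))
    (hdiam : ∃ s > (0 : ℝ), ∀ᶠ n : ℕ in atTop, ∀ i ∈ F n,
      ediam (A n i) ≤ ENNReal.ofReal ((2 : ℝ) ^ (-(s * n))))
    (X : Set E) : dimH (e ⁻¹' X) ≤ ENNReal.ofReal (γ / ξ) := by
  have ht : 0 < ξ * (δ / γ) := by positivity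
  have htQ : ξ * (δ / γ) < ξ * Q := by
    rw [hQ]
    gcongr
    linarith
  have hκ : ∀ s ∈ Ioc 0 (ξ * (δ / γ)), kpzExponent δ Q ξ s ≤ s * (γ / ξ : ℝ).toNNReal := by
    intro s _
    rw [Real.coe_toNNReal _ (by positivity)]
    exact kpzExponent_le_tangent hγ.ne' hQ hξ.ne' s
  refine (dimH_preimage_le_max hA ht (continuous_kpzExponent δ Q ξ).continuousOn hdiam
    (fun s hs => hcard s ⟨hs.1, hs.2.trans_lt htQ⟩) hκ X).trans (max_le le_rfl ?_)
  calc dimH X / ENNReal.ofReal (ξ * (δ / γ))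
      ≤ ENNReal.ofReal δ / ENNReal.ofReal (ξ * (δ / γ)) :=
        ENNReal.div_le_div_right ((dimH_mono (subset_univ X)).trans hE) _
    _ = ENNReal.ofReal (γ / ξ) := by
        rw [← ENNReal.ofReal_div_of_pos ht]
        congr 1
        field_simp

theorem worst_case_kpz_quantum_general (hA : IsDyadicallyChained e F A)
    (hE : dimH (univ : Set E) ≤ ENNReal.ofReal δ) (hδ : 0 < δ) (hγ : 0 < γ)
    (hQ : Q = δ / γ + γ / 2) (hξ : 0 < ξ)
    (hcard : ∀ s ∈ Ioo 0 (ξ * Q), ∀ a > kpzExponent δ Q ξ s,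
      ∀ᶠ n : ℕ in atTop, ((largeIndices F A s n).card : ℝ) ≤ 2 ^ (a * n))
    (hdiam : ∃ s > (0 : ℝ), ∀ᶠ n : ℕ in atTop, ∀ i ∈ F n,
      ediam (A n i) ≤ ENNReal.ofReal ((2 : ℝ) ^ (-(s * n))))
    (X : Set E) :
    (dimH X < ENNReal.ofReal (δ - γ ^ 2 / 2) →
      dimH (e ⁻¹' X) ≤ ENNReal.ofReal ((dimH X).toReal /
        (ξ * (Q - √(2 * δ - 2 * (dimH X).toReal))))) ∧
      dimH (e ⁻¹' X) ≤ ENNReal.ofReal (γ / ξ) :=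
  ⟨dimH_preimage_le_of_dimH_lt hA hγ hQ hξ hcard hdiam,
    dimH_preimage_le_of_dimH_univ_le hA hE hδ hγ hQ hξ hcard hdiam X⟩

end WorstCaseKPZ

section DyadicSquares

theorem mem_dyadicSquare_iff {n j k : ℕ} {z : ℂ} :
    z ∈ dyadicSquare n j k ↔
      z.re * 2 ^ n ∈ Icc (j : ℝ) (j + 1) ∧ z.im * 2 ^ n ∈ Icc (k : ℝ) (k + 1) := by
  have h : (0 : ℝ) < 2 ^ n := by positivity
  simp only [dyadicSquare, mem_ofPred_eq, mem_Icc, zpow_neg, zpow_natCast, Int.cast_natCast,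
    ← div_eq_mul_inv, div_le_iff₀ h, le_div_iff₀ h]

theorem mem_unitSquare_iff {z : ℂ} :
    z ∈ unitSquare ↔ z.re ∈ Icc (0 : ℝ) 1 ∧ z.im ∈ Icc (0 : ℝ) 1 := by
  simpa [unitSquare] using mem_dyadicSquare_iff (n := 0) (j := 0) (k := 0) (z := z)

/-- The position of `x ∈ [0, 1]` in the division of `[0, 1]` into `2ⁿ` dyadic intervals; the
minimum puts the endpoint `1` into the last interval. -/
def dyadicIndex (n : ℕ) (x : ℝ) : ℕ := min ⌊x * 2 ^ n⌋₊ (2 ^ n - 1)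

theorem dyadicIndex_lt (n : ℕ) (x : ℝ) : dyadicIndex n x < 2 ^ n :=
  (min_le_right _ _).trans_lt (Nat.sub_lt (by positivity) one_pos)

theorem mul_two_pow_mem_Icc_dyadicIndex (n : ℕ) {x : ℝ} (hx : x ∈ Icc (0 : ℝ) 1) :
    x * 2 ^ n ∈ Icc (dyadicIndex n x : ℝ) (dyadicIndex n x + 1) := by
  have hx0 : 0 ≤ x * 2 ^ n := mul_nonneg hx.1 (by positivity)
  refine ⟨(Nat.cast_le.2 (min_le_left _ _)).trans (Nat.floor_le hx0), ?_⟩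
  rw [dyadicIndex, Nat.cast_min, ← min_add_add_right]
  refine le_min (Nat.lt_floor_add_one _).le ?_
  have : (1 : ℕ) ≤ 2 ^ n := Nat.one_le_two_pow
  push_cast [this]
  nlinarith [hx.2, pow_pos (two_pos : (0 : ℝ) < 2) n]

theorem dyadicIndex_le_add_one (n : ℕ) {x y : ℝ} (hx : 0 ≤ x) (hyx : y ≤ x + (1 / 2) ^ n) :
    dyadicIndex n y ≤ dyadicIndex n x + 1 := by
  have h2 : (1 / 2 : ℝ) ^ n * 2 ^ n = 1 := by rw [← mul_pow]; norm_num
  have hfloor : ⌊y * 2 ^ n⌋₊ ≤ ⌊x * 2 ^ n⌋₊ + 1 := by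
    rw [← Nat.floor_add_one (by positivity), ← h2, ← add_mul]
    gcongr
  unfold dyadicIndex
  omega

theorem exists_mem_Icc_dyadicIndex (n : ℕ) {x y : ℝ} (hx : 0 ≤ x) (hy : 0 ≤ y)
    (hxy : |x - y| ≤ (1 / 2) ^ n) :
    ∃ c ∈ Icc (0 : ℝ) 1, c * 2 ^ n ∈ Icc (dyadicIndex n x : ℝ) (dyadicIndex n x + 1) ∧
      c * 2 ^ n ∈ Icc (dyadicIndex n y : ℝ) (dyadicIndex n y + 1) := by
  rw [abs_sub_le_iff] at hxy
  have h1 := dyadicIndex_le_add_one n hy (y := x) (by linarith)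
  have h2 := dyadicIndex_le_add_one n hx (y := y) (by linarith)
  have hlt := max_lt (dyadicIndex_lt n x) (dyadicIndex_lt n y)
  refine ⟨(max (dyadicIndex n x) (dyadicIndex n y) : ℕ) / 2 ^ n,
    ⟨by positivity, (div_le_one (by positivity)).2 (by exact_mod_cast hlt.le)⟩, ?_⟩
  rw [div_mul_cancel₀ _ (by positivity)]
  norm_cast
  simp only [mem_Icc, Nat.cast_le]
  exact ⟨⟨le_max_left _ _, max_le (Nat.le_succ _) h2⟩, le_max_right _ _, max_le h1 (Nat.le_succ _)⟩

/-- The positions `(j, k)` of the dyadic squares of side length `2⁻ⁿ` in the unit square. -/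
def dyadicIndices (n : ℕ) : Finset (ℕ × ℕ) := Finset.range (2 ^ n) ×ˢ Finset.range (2 ^ n)

theorem mem_dyadicIndices {n : ℕ} {p : ℕ × ℕ} :
    p ∈ dyadicIndices n ↔ p.1 < 2 ^ n ∧ p.2 < 2 ^ n := by
  simp only [dyadicIndices, Finset.mem_product, Finset.mem_range]

/-- The dyadic squares of side length `2⁻ⁿ`, seen in a space `Y` which parametrizes the unit
square. -/
def dyadicPiece {Y : Type*} (e : Y → ℂ) (n : ℕ) (p : ℕ × ℕ) : Set Y :=
  e ⁻¹' dyadicSquare n p.1 p.2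

variable {Y : Type*} {e : Y → ℂ}

theorem isDyadicallyChained_dyadicPiece (he : range e = unitSquare) :
    IsDyadicallyChained e dyadicIndices (dyadicPiece e) := by
  intro n y y' h
  obtain ⟨hre, him⟩ := mem_unitSquare_iff.1 (he ▸ mem_range_self y)
  obtain ⟨hre', him'⟩ := mem_unitSquare_iff.1 (he ▸ mem_range_self y')
  rw [Complex.dist_eq] at h
  obtain ⟨a, ha, hay, hay'⟩ := exists_mem_Icc_dyadicIndex n hre.1 hre'.1
    ((Complex.abs_re_le_norm (e y - e y')).trans h)
  obtain ⟨b, hb, hby, hby'⟩ := exists_mem_Icc_dyadicIndex n him.1 him'.1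
    ((Complex.abs_im_le_norm (e y - e y')).trans h)
  obtain ⟨c, hc⟩ : (⟨a, b⟩ : ℂ) ∈ range e := he ▸ mem_unitSquare_iff.2 ⟨ha, hb⟩
  have hindex : ∀ z : ℂ, (dyadicIndex n z.re, dyadicIndex n z.im) ∈ dyadicIndices n := fun z =>
    mem_dyadicIndices.2 ⟨dyadicIndex_lt n _, dyadicIndex_lt n _⟩
  refine ⟨_, hindex (e y), _, hindex (e y'), mem_dyadicSquare_iff.2 ⟨?_, ?_⟩,
    mem_dyadicSquare_iff.2 ⟨?_, ?_⟩, c, mem_dyadicSquare_iff.2 ?_, mem_dyadicSquare_iff.2 ?_⟩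
  · exact mul_two_pow_mem_Icc_dyadicIndex n hre
  · exact mul_two_pow_mem_Icc_dyadicIndex n him
  · exact mul_two_pow_mem_Icc_dyadicIndex n hre'
  · exact mul_two_pow_mem_Icc_dyadicIndex n him'
  · rw [hc]
    exact ⟨hay, hby⟩
  · rw [hc]
    exact ⟨hay', hby'⟩

theorem card_largeIndices_dyadicPiece [EMetricSpace Y] (e : Y → ℂ) (s : ℝ) (n : ℕ) :
    (largeIndices dyadicIndices (dyadicPiece e) s n).card =
      Set.ncard {p : ℕ × ℕ | p.1 < 2 ^ n ∧ p.2 < 2 ^ n ∧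
        ENNReal.ofReal ((2 : ℝ) ^ (-(s * n))) < ediam (e ⁻¹' dyadicSquare n p.1 p.2)} := by
  rw [← ncard_coe_finset]
  congr 1
  ext p
  simp only [Finset.mem_coe, mem_largeIndices, mem_dyadicIndices, dyadicPiece, mem_ofPred_eq,
    and_assoc]

end DyadicSquares

/-- worst-case KPZ bound, upper bound for quantum dimension.
Let `γ ∈ (0,2)`, `Q = 2/γ + γ/2`, `ξ > 0`, and let `D` be a metric on `[0,1]²` satisfying the
two square-counting hypotheses. Then for every `X ⊆ [0,1]²` with Euclidean Hausdorff dimension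
`d₀`, the Hausdorff dimension of `X` w.r.t. `D` is at most `d₀/(ξ(Q - √(4 - 2d₀)))` whenever
`d₀ < 2 - γ²/2`, and is at most `γ/ξ` in any case. -/
theorem worst_case_kpz_quantum (γ : ℝ) (hγ0 : 0 < γ) (hγ2 : γ < 2)
    (Q : ℝ) (hQ : Q = 2 / γ + γ / 2) (ξ : ℝ) (hξ : 0 < ξ)
    (D : MetricSpace ↥unitSquare)
    (hcount : ∀ s : ℝ, 0 < s → s < ξ * Q → ∀ ζ : ℝ, 0 < ζ → ζ < 1 → ∃ N : ℕ, ∀ n : ℕ, N ≤ n →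
      (Set.ncard {p : ℕ × ℕ | p.1 < 2 ^ n ∧ p.2 < 2 ^ n ∧
          ENNReal.ofReal ((2 : ℝ) ^ (-(s * n))) < sqDiam D (dyadicSquare n p.1 p.2)} : ℝ) ≤
        2 ^ ((2 - (ξ * Q - s) ^ 2 / (2 * ξ ^ 2) + ζ) * n))
    (hsmall : ∀ s : ℝ, 0 < s → s < ξ * (Q - 2) → ∃ N : ℕ, ∀ n : ℕ, N ≤ n →
      ∀ p : ℕ × ℕ, p.1 < 2 ^ n → p.2 < 2 ^ n →
        sqDiam D (dyadicSquare n p.1 p.2) ≤ ENNReal.ofReal ((2 : ℝ) ^ (-(s * n)))) :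
    ∀ X : Set ℂ, X ⊆ unitSquare →
      ((dimH X < ENNReal.ofReal (2 - γ ^ 2 / 2) →
        sqDimH D X ≤ ENNReal.ofReal ((dimH X).toReal /
          (ξ * (Q - Real.sqrt (4 - 2 * (dimH X).toReal))))) ∧
       sqDimH D X ≤ ENNReal.ofReal (γ / ξ)) := by
  intro X _
  let _ : EMetricSpace unitSquare := D.toEMetricSpace
  have hdim : dimH (univ : Set ℂ) ≤ ENNReal.ofReal 2 := by
    simp [Real.dimH_univ_eq_finrank, Complex.finrank_real_complex]
  have hQ2 : 2 < Q := lt_of_eq_div_add_div_two hγ0 hQ hγ2 (by norm_num)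
  obtain ⟨s, hs0, hs⟩ := exists_between (mul_pos hξ (sub_pos.2 hQ2))
  obtain ⟨N, hN⟩ := hsmall s hs0 hs
  have hmain := worst_case_kpz_quantum_general
    (isDyadicallyChained_dyadicPiece Subtype.range_coe) hdim two_pos hγ0 hQ hξ
    (fun s hs a ha => by
      simp only [card_largeIndices_dyadicPiece]
      exact eventually_le_two_rpow_mul_of_lt (hcount s hs.1 hs.2) ha)
    ⟨s, hs0, eventually_atTop.2 ⟨N, fun n hn p hp =>
      hN n hn p (mem_dyadicIndices.1 hp).1 (mem_dyadicIndices.1 hp).2⟩⟩ X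
  rwa [show (2 * 2 : ℝ) = 4 by norm_num] at hmain
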